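/- For every real x ≠ 0, with f(τ) := Σ_{n=1}^∞ (−1)^{n−1} n sin(2πn/3) exp(−(2π/3) n² τ), the function τ ↦ e^{−(2π/3) τ x²} f(τ) is integrable on (0, ∞) and ∫₀^∞ e^{−(2π/3) τ x²} f(τ) dτ = (3/4) · sinh(2πx/3) / sinh(πx). -/

import Mathlib

open Real MeasureTheory Set

/-- `f τ = Σ_{n=1}^∞ (−1)^{n−1} n sin(2πn/3) exp(−(2π/3) n² τ)`. The `n = 0` term vanishes,
and for `n ≥ 1` one has `(−1)^{n+1} = (−1)^{n−1}`. -/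
noncomputable def f (τ : ℝ) : ℝ :=
  ∑' n : ℕ, (-1 : ℝ) ^ (n + 1) * n * Real.sin (2 * π * n / 3) * Real.exp (-(2 * π / 3) * n ^ 2 * τ)

/-!
`f τ` is half the Hurwitz sine kernel with parameter `1 / 6` at `2 * τ / 3`. Integrating its
defining series term by term against `exp (-(2 * π / 3) * τ * x ^ 2)` would give a series that
converges only conditionally. The functional equation instead writes the kernel as a series of Lévy
densities `b * t ^ (-3 / 2) * exp (-π * b ^ 2 / t)`, `b ∈ 1 / 6 + ℤ`, whose Laplace transforms are
`± exp (-2 * π * |b * x|)` by the Cauchy–Schlömilch substitution. The transforms form two geometric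
series, and these sum to the quotient of hyperbolic sines.
-/

open HurwitzZeta

section TermwiseIntegration

variable {α ι E : Type*} [MeasurableSpace α] {μ : Measure α} [Countable ι] [NormedAddCommGroup E]
  {F : ι → α → E} {G : α → E}

lemma integrable_of_hasSum_of_summable_integral_norm (hF_int : ∀ i, Integrable (F i) μ)
    (hF_sum : Summable fun i => ∫ a, ‖F i a‖ ∂μ) (hG : ∀ᵐ a ∂μ, HasSum (F · a) (G a)) :
    Integrable G μ := by
  refine ⟨aestronglyMeasurable_of_tendsto_ae Filter.atTop
    (fun s => s.aestronglyMeasurable_fun_sum fun i _ => (hF_int i).1) hG, ?_⟩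
  calc ∫⁻ a, ‖G a‖ₑ ∂μ ≤ ∫⁻ a, ∑' i, ‖F i a‖ₑ ∂μ :=
        lintegral_mono_ae <| hG.mono fun a ha => ha.tsum_eq ▸ enorm_tsum_le_tsum_enorm
    _ = ∑' i, ENNReal.ofReal (∫ a, ‖F i a‖ ∂μ) := by
        rw [lintegral_tsum fun i => (hF_int i).1.enorm]
        exact tsum_congr fun i => (ofReal_integral_norm_eq_lintegral_enorm (hF_int i)).symm
    _ < ⊤ := hF_sum.tsum_ofReal_lt_top

lemma hasSum_integral_of_hasSum_of_summable_integral_norm [NormedSpace ℝ E]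
    (hF_int : ∀ i, Integrable (F i) μ) (hF_sum : Summable fun i => ∫ a, ‖F i a‖ ∂μ)
    (hG : ∀ᵐ a ∂μ, HasSum (F · a) (G a)) : HasSum (fun i => ∫ a, F i a ∂μ) (∫ a, G a ∂μ) := by
  rw [integral_congr_ae (hG.mono fun a ha => ha.tsum_eq.symm)]
  exact hasSum_integral_of_summable_integral_norm hF_int hF_sum

end TermwiseIntegration

section CauchySchlomilch

variable {E : Type*} [NormedAddCommGroup E] [NormedSpace ℝ E] {g : ℝ → E} {a b : ℝ}

lemma strictMonoOn_mul_sub_div (ha : 0 < a) (hb : 0 ≤ b) :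
    StrictMonoOn (fun u : ℝ => a * u - b / u) (Ioi 0) := by
  intro u hu v _ huv
  have hu : 0 < u := hu
  have hdiv : b / v ≤ b / u := by gcongr
  have hmul : a * u < a * v := by gcongr
  dsimp only
  linarith

lemma hasDerivAt_mul_sub_div (a b : ℝ) {u : ℝ} (hu : u ≠ 0) :
    HasDerivAt (fun u : ℝ => a * u - b / u) (a + b / u ^ 2) u := by
  convert! ((hasDerivAt_id u).const_mul a).sub ((hasDerivAt_inv hu).const_mul b) using 1
  ring

lemma image_mul_sub_div_Ioi (ha : 0 < a) (hb : 0 < b) :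
    (fun u : ℝ => a * u - b / u) '' Ioi 0 = univ := by
  refine eq_univ_of_forall fun y => ?_
  set r := √(y ^ 2 + 4 * a * b)
  have hroot : |y| < r := by
    rw [← sqrt_sq_eq_abs]
    exact sqrt_lt_sqrt (sq_nonneg y) (by linarith [mul_pos ha hb])
  have hr_sq : r ^ 2 = y ^ 2 + 4 * a * b := sq_sqrt (by positivity)
  have hnum : 0 < y + r := by linarith [neg_abs_le y]
  refine ⟨(y + r) / (2 * a), div_pos hnum (by positivity), ?_⟩
  have hnum_ne := hnum.ne'
  dsimp only
  field_simp
  linear_combination hr_sq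

lemma integrableOn_add_div_sq_smul_comp_mul_sub_div (hg : Integrable g) (ha : 0 < a) (hb : 0 < b) :
    IntegrableOn (fun u => (a + b / u ^ 2) • g (a * u - b / u)) (Ioi 0) := by
  rw [← integrableOn_image_iff_integrableOn_deriv_smul_of_monotoneOn measurableSet_Ioi
    (fun u hu => (hasDerivAt_mul_sub_div a b (ne_of_gt hu)).hasDerivWithinAt)
    (strictMonoOn_mul_sub_div ha hb.le).monotoneOn g, image_mul_sub_div_Ioi ha hb]
  exact hg.integrableOn

lemma integral_add_div_sq_smul_comp_mul_sub_div (g : ℝ → E) (ha : 0 < a) (hb : 0 < b) :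
    ∫ u in Ioi 0, (a + b / u ^ 2) • g (a * u - b / u) = ∫ v, g v := by
  rw [← integral_image_eq_integral_deriv_smul_of_monotoneOn measurableSet_Ioi
    (fun u hu => (hasDerivAt_mul_sub_div a b (ne_of_gt hu)).hasDerivWithinAt)
    (strictMonoOn_mul_sub_div ha hb.le).monotoneOn g, image_mul_sub_div_Ioi ha hb, setIntegral_univ]

lemma integral_div_sq_smul_comp_div_Ioi (g : ℝ → E) {k : ℝ} (hk : 0 < k) :
    ∫ u in Ioi 0, (k / u ^ 2) • g (k / u) = ∫ v in Ioi 0, g v := by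
  have hscale := integral_comp_mul_left_Ioi' g 0 hk
  rw [mul_zero] at hscale
  rw [← hscale, ← integral_comp_rpow_Ioi (fun v => g (k * v)) (p := -1) (by norm_num),
    ← integral_smul]
  refine setIntegral_congr_fun measurableSet_Ioi fun u hu => ?_
  have hu : 0 < u := hu
  have hpow : u ^ (-1 - 1 : ℝ) = (u ^ 2)⁻¹ := by
    rw [show (-1 - 1 : ℝ) = -(2 : ℕ) by norm_num, rpow_neg hu.le, rpow_natCast]
  simp only [hpow, rpow_neg_one, abs_neg, abs_one, one_mul, smul_smul, div_eq_mul_inv]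

lemma integrableOn_comp_mul_sub_div (hg : Integrable g) (ha : 0 < a) (hb : 0 < b) :
    IntegrableOn (fun u => g (a * u - b / u)) (Ioi 0) := by
  have hweight : ∀ u : ℝ, a ≤ a + b / u ^ 2 := fun u => le_add_of_nonneg_right (by positivity)
  have hbdd : ∀ u : ℝ, ‖(a + b / u ^ 2)⁻¹‖ ≤ a⁻¹ := fun u => by
    rw [norm_inv, norm_of_nonneg (ha.le.trans (hweight u))]
    exact inv_anti₀ ha (hweight u)
  have hmeas : Measurable fun u : ℝ => (a + b / u ^ 2)⁻¹ := by fun_prop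
  refine ((integrableOn_add_div_sq_smul_comp_mul_sub_div hg ha hb).bdd_smul a⁻¹
    hmeas.aestronglyMeasurable (.of_forall hbdd)).congr (.of_forall fun u => ?_)
  exact inv_smul_smul₀ (ha.trans_le (hweight u)).ne' _

/-- Both halves of the weight `a + b / u ^ 2` contribute equally, because the substitution
`u ↦ (b / a) / u` exchanges them and changes the sign of `a * u - b / u`. -/
lemma integral_comp_mul_sub_div_of_even (hg : Integrable g) (heven : g.Even) (ha : 0 < a)
    (hb : 0 < b) : (2 * a) • ∫ u in Ioi 0, g (a * u - b / u) = ∫ v, g v := by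
  have hint := integrableOn_comp_mul_sub_div hg ha hb
  have hflip : ∫ u in Ioi 0, (b / u ^ 2) • g (a * u - b / u) =
      a • ∫ u in Ioi 0, g (a * u - b / u) := by
    rw [← integral_div_sq_smul_comp_div_Ioi (fun u => g (a * u - b / u)) (div_pos hb ha),
      ← integral_smul]
    refine setIntegral_congr_fun measurableSet_Ioi fun u hu => ?_
    have hu : u ≠ 0 := ne_of_gt hu
    have harg : a * (b / a / u) - b / (b / a / u) = -(a * u - b / u) := by
      field_simp
      ring
    have hcoeff : a * (b / a / u ^ 2) = b / u ^ 2 := by field_simp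
    simp only [harg, heven _, smul_smul, hcoeff]
  have hint_flip : IntegrableOn (fun u => (b / u ^ 2) • g (a * u - b / u)) (Ioi 0) := by
    refine ((integrableOn_add_div_sq_smul_comp_mul_sub_div hg ha hb).sub (hint.smul a)).congr
      (.of_forall fun u => ?_)
    simp [add_smul]
  rw [← integral_add_div_sq_smul_comp_mul_sub_div g ha hb]
  simp only [add_smul]
  rw [integral_add (hint.fun_smul a) hint_flip, hflip, integral_smul, two_mul, add_smul]

end CauchySchlomilch

section LevyDensity

variable {a b : ℝ}

lemma exp_neg_sq_mul_sq_sub_sq_div_sq (a b : ℝ) {s : ℝ} (hs : s ≠ 0) :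
    exp (-(a * s) ^ 2 - (b / s) ^ 2) = exp (-2 * (a * b)) * exp (-1 * (a * s - b / s) ^ 2) := by
  rw [← exp_add]
  congr 1
  field_simp
  ring

lemma rpow_smul_exp_neg_mul_rpow_sq_sub_div_rpow_sq (a b : ℝ) {t : ℝ} (ht : 0 < t) :
    t ^ (-(1 / 2) - 1 : ℝ) •
        exp (-(a * t ^ (-(1 / 2) : ℝ)) ^ 2 - (b / t ^ (-(1 / 2) : ℝ)) ^ 2) =
      t ^ (-(3 / 2) : ℝ) * exp (-a ^ 2 / t - b ^ 2 * t) := by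
  have hsq : (t ^ (-(1 / 2) : ℝ)) ^ 2 = t⁻¹ := by
    rw [← rpow_mul_natCast ht.le, ← rpow_neg_one]
    norm_num
  rw [mul_pow, div_pow, hsq, div_inv_eq_mul, smul_eq_mul,
    show (-(1 / 2) - 1 : ℝ) = -(3 / 2) by norm_num]
  ring_nf

lemma integrableOn_exp_neg_mul_sq_sub_div_sq (ha : 0 < a) (hb : 0 < b) :
    IntegrableOn (fun s => exp (-(a * s) ^ 2 - (b / s) ^ 2)) (Ioi 0) :=
  (integrableOn_congr_fun (fun _ hs => exp_neg_sq_mul_sq_sub_sq_div_sq a b (ne_of_gt hs))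
    measurableSet_Ioi).2
    ((integrableOn_comp_mul_sub_div (integrable_exp_neg_mul_sq one_pos) ha hb).const_mul _)

lemma integral_exp_neg_mul_sq_sub_div_sq (ha : 0 < a) (hb : 0 < b) :
    ∫ s in Ioi 0, exp (-(a * s) ^ 2 - (b / s) ^ 2) = √π / (2 * a) * exp (-2 * (a * b)) := by
  have hgauss := integral_comp_mul_sub_div_of_even (integrable_exp_neg_mul_sq one_pos)
    (fun v => by rw [neg_sq]) ha hb
  rw [integral_gaussian, div_one, smul_eq_mul] at hgauss
  rw [setIntegral_congr_fun measurableSet_Ioi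
    fun s hs => exp_neg_sq_mul_sq_sub_sq_div_sq a b (ne_of_gt hs), integral_const_mul, ← hgauss]
  field_simp

lemma integrableOn_rpow_mul_exp_neg_sq_div_sub (ha : 0 < a) (hb : 0 < b) :
    IntegrableOn (fun t => t ^ (-(3 / 2) : ℝ) * exp (-a ^ 2 / t - b ^ 2 * t)) (Ioi 0) := by
  refine (integrableOn_congr_fun (fun t ht => ?_) measurableSet_Ioi).1
    ((integrableOn_Ioi_comp_rpow_iff' _ (p := -(1 / 2)) (by norm_num)).2
      (integrableOn_exp_neg_mul_sq_sub_div_sq ha hb))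
  exact rpow_smul_exp_neg_mul_rpow_sq_sub_div_rpow_sq a b ht

lemma integral_rpow_mul_exp_neg_sq_div_sub (ha : 0 < a) (hb : 0 < b) :
    ∫ t in Ioi 0, t ^ (-(3 / 2) : ℝ) * exp (-a ^ 2 / t - b ^ 2 * t) =
      √π / a * exp (-2 * (a * b)) := by
  have hsubst := integral_comp_rpow_Ioi (fun s => exp (-(a * s) ^ 2 - (b / s) ^ 2))
    (p := -(1 / 2)) (by norm_num)
  simp only [mul_smul] at hsubst
  rw [integral_smul, setIntegral_congr_fun measurableSet_Ioi fun t ht =>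
      rpow_smul_exp_neg_mul_rpow_sq_sub_div_rpow_sq a b ht,
    integral_exp_neg_mul_sq_sub_div_sq ha hb, abs_neg, abs_of_pos (by norm_num), smul_eq_mul]
    at hsubst
  linear_combination 2 * hsubst

/-- The signed Lévy density with parameter `b`, which is up to a constant the `b`-derivative of the
heat kernel. It is normalised so that the Hurwitz sine kernel with parameter `a` is the sum of its
values over `b ∈ a + ℤ`. -/
noncomputable def levyDensity (b t : ℝ) : ℝ := t ^ (-(3 / 2) : ℝ) * (b * exp (-π * b ^ 2 / t))

lemma exp_mul_levyDensity (x b t : ℝ) :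
    exp (-π * x ^ 2 * t) * levyDensity b t =
      b * (t ^ (-(3 / 2) : ℝ) * exp (-(√π * |b|) ^ 2 / t - (√π * |x|) ^ 2 * t)) := by
  simp only [mul_pow, sq_abs, sq_sqrt pi_nonneg, levyDensity, sub_eq_add_neg, exp_add, neg_mul]
  ring

lemma integrableOn_exp_mul_levyDensity {x : ℝ} (hx : x ≠ 0) (b : ℝ) :
    IntegrableOn (fun t => exp (-π * x ^ 2 * t) * levyDensity b t) (Ioi 0) := by
  simp only [exp_mul_levyDensity]
  rcases eq_or_ne b 0 with rfl | hb
  · simp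
  · exact (integrableOn_rpow_mul_exp_neg_sq_div_sub (by positivity) (by positivity)).const_mul b

lemma integral_exp_mul_levyDensity {x : ℝ} (hx : x ≠ 0) (b : ℝ) :
    ∫ t in Ioi 0, exp (-π * x ^ 2 * t) * levyDensity b t =
      SignType.sign b * exp (-(2 * π * |x|) * |b|) := by
  simp only [exp_mul_levyDensity]
  rcases eq_or_ne b 0 with rfl | hb
  · simp
  · have hexp : -2 * (√π * |b| * (√π * |x|)) = -(2 * π * |x|) * |b| := by
      linear_combination -2 * |b| * |x| * mul_self_sqrt pi_nonneg
    rw [integral_const_mul, integral_rpow_mul_exp_neg_sq_div_sub (by positivity) (by positivity),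
      hexp, div_mul_cancel_left₀ (by positivity), ← mul_assoc, ← div_eq_mul_inv,
      div_eq_of_eq_mul (abs_ne_zero.2 hb) (sign_mul_abs b).symm]

lemma norm_exp_mul_levyDensity (x b : ℝ) {t : ℝ} (ht : 0 < t) :
    ‖exp (-π * x ^ 2 * t) * levyDensity b t‖ = exp (-π * x ^ 2 * t) * levyDensity |b| t := by
  simp only [levyDensity, norm_mul, norm_of_nonneg (exp_nonneg _),
    norm_of_nonneg (rpow_nonneg ht.le _), norm_eq_abs b, sq_abs]

lemma integral_norm_exp_mul_levyDensity {x : ℝ} (hx : x ≠ 0) (b : ℝ) :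
    ∫ t in Ioi 0, ‖exp (-π * x ^ 2 * t) * levyDensity b t‖ =
      ‖SignType.sign b * exp (-(2 * π * |x|) * |b|)‖ := by
  rw [setIntegral_congr_fun measurableSet_Ioi fun t ht => norm_exp_mul_levyDensity x b ht,
    integral_exp_mul_levyDensity hx, abs_abs, norm_mul, norm_of_nonneg (exp_nonneg _)]
  rcases lt_trichotomy b 0 with hb | rfl | hb
  · simp [hb, hb.ne]
  · simp
  · simp [hb, hb.ne']

end LevyDensity

section SineKernel

variable {a c x : ℝ}

lemma hasSum_exp_neg_mul_nat_add (hc : 0 < c) (u : ℝ) :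
    HasSum (fun n : ℕ => exp (-c * (n + u))) (exp (c * (1 / 2 - u)) / (2 * sinh (c / 2))) := by
  have hlt : exp (-c) < 1 := exp_lt_one_iff.2 (neg_neg_of_pos hc)
  have hsinh : 0 < sinh (c / 2) := sinh_pos_iff.2 (half_pos hc)
  have hvalue : exp (c * (1 / 2 - u)) / (2 * sinh (c / 2)) =
      exp (-c * u) * (1 - exp (-c))⁻¹ := by
    rw [← div_eq_mul_inv, div_eq_div_iff (mul_pos two_pos hsinh).ne' (sub_pos.2 hlt).ne', sinh_eq,
      mul_div_cancel₀ _ two_ne_zero, mul_one_sub, mul_sub (exp _), ← exp_add, ← exp_add, ← exp_add]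
    ring_nf
  rw [hvalue]
  refine ((hasSum_geometric_of_lt_one (exp_nonneg _) hlt).mul_left _).congr_fun fun n => ?_
  rw [← exp_nat_mul, ← exp_add]
  ring_nf

lemma hasSum_sign_mul_exp_neg_mul_abs (ha : a ∈ Ioo 0 1) (hc : 0 < c) :
    HasSum (fun n : ℤ => (SignType.sign (n + a) : ℝ) * exp (-c * |n + a|))
      (sinh (c * (1 / 2 - a)) / sinh (c / 2)) := by
  have hvalue : sinh (c * (1 / 2 - a)) / sinh (c / 2) = exp (c * (1 / 2 - a)) / (2 * sinh (c / 2)) +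
      -(exp (c * (1 / 2 - (1 - a))) / (2 * sinh (c / 2))) := by
    rw [sinh_eq (c * (1 / 2 - a))]
    ring_nf
  rw [hvalue]
  refine HasSum.of_nat_of_neg_add_one
    ((hasSum_exp_neg_mul_nat_add hc a).congr_fun fun n => ?_)
    ((hasSum_exp_neg_mul_nat_add hc (1 - a)).neg.congr_fun fun n => ?_)
  · have hpos : 0 < (n : ℝ) + a := add_pos_of_nonneg_of_pos n.cast_nonneg ha.1
    simp [sign_pos hpos, abs_of_pos hpos]
  · have hneg : ((-(n + 1 : ℤ) : ℤ) : ℝ) + a < 0 := by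
      push_cast
      linarith [ha.2, n.cast_nonneg (α := ℝ)]
    rw [sign_neg hneg, abs_of_neg hneg, SignType.coe_neg_one, neg_one_mul]
    push_cast
    ring_nf

lemma sinKernel_eq_rpow_mul_oddKernel_inv (a : UnitAddCircle) {t : ℝ} (ht : 0 < t) :
    sinKernel a t = t ^ (-(3 / 2) : ℝ) * oddKernel a t⁻¹ := by
  rw [oddKernel_functional_equation, one_div t⁻¹, inv_inv, inv_rpow ht.le, one_div,
    inv_inv, ← mul_assoc, ← rpow_add ht, neg_add_cancel, rpow_zero, one_mul]

lemma hasSum_levyDensity_sinKernel (a : ℝ) {t : ℝ} (ht : 0 < t) :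
    HasSum (fun n : ℤ => levyDensity (n + a) t) (sinKernel a t) := by
  rw [sinKernel_eq_rpow_mul_oddKernel_inv _ ht]
  exact (hasSum_int_oddKernel a (inv_pos.2 ht)).mul_left _

lemma ae_hasSum_exp_mul_levyDensity (x a : ℝ) :
    ∀ᵐ t ∂volume.restrict (Ioi 0),
      HasSum (fun n : ℤ => exp (-π * x ^ 2 * t) * levyDensity (n + a) t)
        (exp (-π * x ^ 2 * t) * sinKernel a t) :=
  (ae_restrict_mem measurableSet_Ioi).mono fun _ ht =>
    (hasSum_levyDensity_sinKernel a ht).mul_left _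

lemma summable_integral_norm_exp_mul_levyDensity (hx : x ≠ 0) (ha : a ∈ Ioo 0 1) :
    Summable fun n : ℤ => ∫ t in Ioi 0, ‖exp (-π * x ^ 2 * t) * levyDensity (n + a) t‖ := by
  simp only [integral_norm_exp_mul_levyDensity hx]
  exact (hasSum_sign_mul_exp_neg_mul_abs ha (by positivity)).summable.norm

lemma integrableOn_exp_mul_sinKernel (hx : x ≠ 0) (ha : a ∈ Ioo 0 1) :
    IntegrableOn (fun t => exp (-π * x ^ 2 * t) * sinKernel a t) (Ioi 0) :=
  integrable_of_hasSum_of_summable_integral_norm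
    (fun n : ℤ => integrableOn_exp_mul_levyDensity hx (n + a))
    (summable_integral_norm_exp_mul_levyDensity hx ha) (ae_hasSum_exp_mul_levyDensity x a)

lemma integral_exp_mul_sinKernel (hx : x ≠ 0) (ha : a ∈ Ioo 0 1) :
    ∫ t in Ioi 0, exp (-π * x ^ 2 * t) * sinKernel a t =
      sinh (π * x * (1 - 2 * a)) / sinh (π * x) := by
  have hsum := hasSum_integral_of_hasSum_of_summable_integral_norm
    (fun n : ℤ => integrableOn_exp_mul_levyDensity hx (n + a))
    (summable_integral_norm_exp_mul_levyDensity hx ha) (ae_hasSum_exp_mul_levyDensity x a)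
  simp only [integral_exp_mul_levyDensity hx] at hsum
  rw [hsum.unique (hasSum_sign_mul_exp_neg_mul_abs ha (by positivity)),
    show 2 * π * |x| * (1 / 2 - a) = |x| * (π * (1 - 2 * a)) by ring,
    show 2 * π * |x| / 2 = |x| * π by ring]
  rcases abs_choice x with h | h
  · rw [h]
    ring_nf
  · rw [h, neg_mul, neg_mul, sinh_neg, sinh_neg, neg_div_neg_eq]
    ring_nf

end SineKernel

lemma f_eq_sinKernel {τ : ℝ} (hτ : 0 < τ) :
    f τ = 1 / 2 * sinKernel (1 / 6 : ℝ) (2 / 3 * τ) := by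
  rw [← (hasSum_nat_sinKernel (1 / 6) (t := 2 / 3 * τ) (by positivity)).tsum_eq,
    ← tsum_mul_left, f]
  refine tsum_congr fun n => ?_
  have hsin : sin (2 * π * (1 / 6) * n) = (-1) ^ (n + 1) * sin (2 * π * n / 3) := by
    rw [show 2 * π * (1 / 6) * n = n * π - 2 * π * n / 3 by ring, sin_nat_mul_pi_sub]
    ring
  rw [hsin, show -π * (n : ℝ) ^ 2 * (2 / 3 * τ) = -(2 * π / 3) * n ^ 2 * τ by ring]
  ring

lemma exp_mul_f_eq_sinKernel (x : ℝ) {τ : ℝ} (hτ : 0 < τ) :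
    exp (-(2 * π / 3) * τ * x ^ 2) * f τ = 1 / 2 * (exp (-π * x ^ 2 * (2 / 3 * τ)) *
      sinKernel (1 / 6 : ℝ) (2 / 3 * τ)) := by
  rw [f_eq_sinKernel hτ, show -(2 * π / 3) * τ * x ^ 2 = -π * x ^ 2 * (2 / 3 * τ) by ring]
  ring

/-- Laplace transform of `f`: for every real `x ≠ 0`, the function
`τ ↦ e^{−(2π/3) τ x²} f(τ)` is integrable on `(0,∞)` and
`∫₀^∞ e^{−(2π/3) τ x²} f(τ) dτ = (3/4) sinh(2πx/3)/sinh(πx)`. -/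
theorem laplace_transform_f (x : ℝ) (hx : x ≠ 0) :
    IntegrableOn (fun τ : ℝ => Real.exp (-(2 * π / 3) * τ * x ^ 2) * f τ) (Ioi 0)
    ∧ ∫ τ in Ioi (0 : ℝ), Real.exp (-(2 * π / 3) * τ * x ^ 2) * f τ
        = 3 / 4 * Real.sinh (2 * π * x / 3) / Real.sinh (π * x) := by
  have hsixth : (1 / 6 : ℝ) ∈ Ioo 0 1 := by norm_num
  let g : ℝ → ℝ := fun t => exp (-π * x ^ 2 * t) * sinKernel (1 / 6 : ℝ) t
  have hkernel : EqOn (fun τ => exp (-(2 * π / 3) * τ * x ^ 2) * f τ)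
      (fun τ => 1 / 2 * g (2 / 3 * τ)) (Ioi 0) := fun τ hτ => exp_mul_f_eq_sinKernel x hτ
  constructor
  · refine (integrableOn_congr_fun hkernel measurableSet_Ioi).2 (Integrable.const_mul ?_ _)
    refine (integrableOn_Ioi_comp_mul_left_iff g 0 (by norm_num)).2 ?_
    rw [mul_zero]
    exact integrableOn_exp_mul_sinKernel hx hsixth
  · rw [setIntegral_congr_fun measurableSet_Ioi hkernel, integral_const_mul,
      integral_comp_mul_left_Ioi g 0 (by norm_num), mul_zero,
      integral_exp_mul_sinKernel hx hsixth, smul_eq_mul]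
    ring_nf
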